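/- arXiv:2311.07096 — 4 statements merged into one kernel-verified Lean document; each statement's English description precedes it below -/
import Mathlib

section
/- For every amplitude vector β ∈ [0,1]^N and every phase vector α ∈ Φ^N there exists a binary amplitude vector β' ∈ {0,1}^N such that |h(β',α)| ≥ |h(β,α)|. Consequently, the maximum of |h(β,α)| over all β ∈ [0,1]^N and α ∈ Φ^N is attained at a point where every reflection amplitude equals 0 or 1. (Lemma 1: in the optimal configuration, the reflection amplitude of each element is either 0 or 1.) -/
/-!
For fixed phases the channel coefficient is affine in the amplitudes, so its modulus is convex on
the cube `[0,1]^N`. That cube is the convex hull of `{0,1}^N`, so the maximum principle for convex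
functions provides a vertex that does at least as well. Since `{0,1}^N × Φ^N` is compact, the best
of these vertices over all phases exists.
-/

open Set

section UnitCube

variable {ι 𝕜 : Type*} [Finite ι] [Field 𝕜] [LinearOrder 𝕜] [IsStrictOrderedRing 𝕜]

theorem convexHull_univ_pi_zero_one :
    convexHull 𝕜 (univ.pi fun _ : ι ↦ ({0, 1} : Set 𝕜)) = univ.pi fun _ ↦ Icc 0 1 := by
  simp only [convexHull_pi, convexHull_pair, segment_eq_Icc zero_le_one]

theorem exists_zero_one_ge_of_convexOn {F : Type*} [AddCommGroup F] [LinearOrder F]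
    [IsOrderedAddMonoid F] [Module 𝕜 F] [IsStrictOrderedModule 𝕜 F] {f : (ι → 𝕜) → F}
    (hf : ConvexOn 𝕜 (univ.pi fun _ ↦ Icc 0 1) f) {x : ι → 𝕜}
    (hx : x ∈ univ.pi fun _ ↦ Icc 0 1) :
    ∃ y ∈ univ.pi fun _ ↦ {0, 1}, f x ≤ f y := by
  rw [← convexHull_univ_pi_zero_one] at hf hx
  exact hf.exists_ge_of_mem_convexHull (subset_convexHull 𝕜 _) hx

theorem exists_zero_one_isMaxOn_of_convexOn {X : Type*} [TopologicalSpace X] {K : Set X}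
    (hK : IsCompact K) (hK_nonempty : K.Nonempty) {f : (ι → ℝ) × X → ℝ}
    (hf_convex : ∀ a ∈ K, ConvexOn ℝ (univ.pi fun _ ↦ Icc 0 1) fun x ↦ f (x, a))
    (hf_cont : ContinuousOn f ((univ.pi fun _ ↦ {0, 1}) ×ˢ K)) :
    ∃ p ∈ (univ.pi fun _ ↦ {0, 1}) ×ˢ K, IsMaxOn f ((univ.pi fun _ ↦ Icc 0 1) ×ˢ K) p := by
  have vertices_compact : IsCompact (univ.pi fun _ : ι ↦ ({0, 1} : Set ℝ)) :=
    isCompact_univ_pi fun _ ↦ (toFinite _).isCompact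
  have vertices_nonempty : (univ.pi fun _ : ι ↦ ({0, 1} : Set ℝ)).Nonempty :=
    univ_pi_nonempty_iff.2 fun _ ↦ insert_nonempty _ _
  obtain ⟨p, hp, p_max⟩ :=
    (vertices_compact.prod hK).exists_isMaxOn (vertices_nonempty.prod hK_nonempty) hf_cont
  refine ⟨p, hp, fun ⟨x, a⟩ ⟨hx, ha⟩ ↦ ?_⟩
  obtain ⟨y, hy, hxy⟩ := exists_zero_one_ge_of_convexOn (hf_convex a ha) hx
  exact hxy.trans (p_max ⟨hy, ha⟩)

end UnitCube

section Channel

variable {ι : Type*} [Fintype ι] (h_d : ℂ) (v : ι → ℂ)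

/-- The overall channel coefficient `h(β, α)`: the direct channel `h_d` plus the reflected channels
`v n`, each scaled by its amplitude `β n` and rotated by its phase shift `α n`. -/
noncomputable def overallChannel (β α : ι → ℝ) : ℂ :=
  h_d + ∑ n, v n * (β n : ℂ) * Complex.exp ((α n : ℂ) * Complex.I)

theorem continuous_overallChannel :
    Continuous fun p : (ι → ℝ) × (ι → ℝ) ↦ overallChannel h_d v p.1 p.2 := by
  unfold overallChannel
  fun_prop

theorem overallChannel_affine_combo (α β γ : ι → ℝ) {a b : ℝ} (hab : a + b = 1) :
    overallChannel h_d v (a • β + b • γ) α =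
      a • overallChannel h_d v β α + b • overallChannel h_d v γ α := by
  have direct : h_d = a • h_d + b • h_d := by rw [← add_smul, hab, one_smul]
  have reflected : ∑ n, v n * ((a • β + b • γ) n : ℂ) * Complex.exp (α n * Complex.I) =
      a • ∑ n, v n * (β n : ℂ) * Complex.exp (α n * Complex.I) +
        b • ∑ n, v n * (γ n : ℂ) * Complex.exp (α n * Complex.I) := by
    simp only [Finset.smul_sum, ← Finset.sum_add_distrib, Complex.real_smul, Pi.add_apply,
      Pi.smul_apply, smul_eq_mul, Complex.ofReal_add, Complex.ofReal_mul]
    exact Finset.sum_congr rfl fun n _ ↦ by ring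
  simp only [overallChannel, reflected, smul_add]
  nth_rw 1 [direct]
  abel

theorem convexOn_norm_overallChannel {s : Set (ι → ℝ)} (hs : Convex ℝ s) (α : ι → ℝ) :
    ConvexOn ℝ s fun β ↦ ‖overallChannel h_d v β α‖ := by
  refine ⟨hs, fun β _ γ _ a b ha hb hab ↦ ?_⟩
  simp only [overallChannel_affine_combo h_d v α β γ hab]
  exact convexOn_univ_norm.2 (mem_univ _) (mem_univ _) ha hb hab

end Channel

theorem stmt_0_general {ι : Type*} [Fintype ι] (h_d : ℂ) (v : ι → ℂ) {Φ : Set ℝ}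
    (hΦ : IsCompact Φ) (hΦ_nonempty : Φ.Nonempty) :
    (∀ β : ι → ℝ, (∀ n, β n ∈ Icc (0 : ℝ) 1) → ∀ α : ι → ℝ,
      ∃ β' : ι → ℝ, (∀ n, β' n = 0 ∨ β' n = 1) ∧
        ‖overallChannel h_d v β α‖ ≤ ‖overallChannel h_d v β' α‖) ∧
    ∃ β' α' : ι → ℝ, (∀ n, β' n = 0 ∨ β' n = 1) ∧ (∀ n, α' n ∈ Φ) ∧
      ∀ β : ι → ℝ, (∀ n, β n ∈ Icc (0 : ℝ) 1) → ∀ α : ι → ℝ, (∀ n, α n ∈ Φ) →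
        ‖overallChannel h_d v β α‖ ≤ ‖overallChannel h_d v β' α'‖ := by
  have norm_convex (α : ι → ℝ) :
      ConvexOn ℝ (univ.pi fun _ ↦ Icc 0 1) fun β ↦ ‖overallChannel h_d v β α‖ :=
    convexOn_norm_overallChannel h_d v (convex_pi fun _ _ ↦ convex_Icc 0 1) α
  constructor
  · intro β hβ α
    obtain ⟨β', hβ', hle⟩ := exists_zero_one_ge_of_convexOn (norm_convex α) fun n _ ↦ hβ n
    exact ⟨β', fun n ↦ hβ' n trivial, hle⟩
  · obtain ⟨⟨β', α'⟩, ⟨hβ', hα'⟩, isMax⟩ := exists_zero_one_isMaxOn_of_convexOn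
      (isCompact_univ_pi fun _ : ι ↦ hΦ) (univ_pi_nonempty_iff.2 fun _ ↦ hΦ_nonempty)
      (fun α _ ↦ norm_convex α) (continuous_overallChannel h_d v).norm.continuousOn
    exact ⟨β', α', fun n ↦ hβ' n trivial, fun n ↦ hα' n trivial,
      fun β hβ α hα ↦ isMaxOn_iff.1 isMax (β, α) ⟨fun n _ ↦ hβ n, fun n _ ↦ hα n⟩⟩

/-- Lemma 1: for every amplitude vector `β ∈ [0,1]^N` and phase vector `α ∈ Φ^N` there is a
binary amplitude vector `β' ∈ {0,1}^N` doing at least as well; consequently the maximum of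
`|h(β,α)|` over `β ∈ [0,1]^N`, `α ∈ Φ^N` is attained at a point with binary amplitudes. -/
theorem stmt_0 {N : ℕ} (hN : 0 < N) (h_d : ℂ) (v : Fin N → ℂ)
    (Φ : Finset ℝ) (hΦ : Φ.Nonempty) :
    (∀ β : Fin N → ℝ, (∀ n, β n ∈ Set.Icc (0:ℝ) 1) →
      ∀ α : Fin N → ℝ, (∀ n, α n ∈ Φ) →
      ∃ β' : Fin N → ℝ, (∀ n, β' n = 0 ∨ β' n = 1) ∧
        ‖h_d + ∑ n, v n * (β n : ℂ) * Complex.exp ((α n : ℂ) * Complex.I)‖ ≤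
        ‖h_d + ∑ n, v n * (β' n : ℂ) * Complex.exp ((α n : ℂ) * Complex.I)‖) ∧
    (∃ β' α' : Fin N → ℝ,
      (∀ n, β' n = 0 ∨ β' n = 1) ∧ (∀ n, α' n ∈ Φ) ∧
      ∀ β : Fin N → ℝ, (∀ n, β n ∈ Set.Icc (0:ℝ) 1) →
        ∀ α : Fin N → ℝ, (∀ n, α n ∈ Φ) →
        ‖h_d + ∑ n, v n * (β n : ℂ) * Complex.exp ((α n : ℂ) * Complex.I)‖ ≤
        ‖h_d + ∑ n, v n * (β' n : ℂ) * Complex.exp ((α' n : ℂ) * Complex.I)‖) := by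
  obtain ⟨binary_ge, binary_max⟩ := stmt_0_general h_d v Φ.finite_toSet.isCompact hΦ
  exact ⟨fun β hβ α _ ↦ binary_ge β hβ α, binary_max⟩
end

section
/- (Lemma 2) Suppose (g_n^*) is an optimal configuration with overall channel h^* and h^* ≠ 0. If for some element n we have v_n ≠ 0 and there exists an index i with ang(h^*, F_{n,i}) < π/2, then g_n^* ≠ 0, i.e., element n is not turned off in the optimal configuration. -/
/-- The angle in `[0,π]` between two nonzero complex numbers regarded as plane vectors:
`ang a b = arccos (Re (a * conj b) / (|a| * |b|))`. -/
noncomputable def ang (a b : ℂ) : ℝ :=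
  Real.arccos ((a * (starRingEnd ℂ) b).re / (‖a‖ * ‖b‖))

open InnerProductGeometry RealInnerProductSpace

theorem sum_update_of_eq_zero {ι M : Type*} [DecidableEq ι] [AddCommMonoid M] {s : Finset ι}
    {f : ι → M} {i : ι} (hi : i ∈ s) (hfi : f i = 0) (x : M) :
    ∑ j ∈ s, Function.update f i x j = ∑ j ∈ s, f j + x := by
  rw [Finset.sum_update_of_mem hi, Finset.sum_eq_add_sum_sdiff_singleton_of_mem hi f, hfi,
    zero_add, add_comm]

section InnerProductSpace

variable {E : Type*} [NormedAddCommGroup E] [InnerProductSpace ℝ E]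

theorem angle_lt_pi_div_two_iff_inner_pos {x y : E} :
    angle x y < Real.pi / 2 ↔ 0 < ⟪x, y⟫ := by
  rw [angle, Real.arccos_lt_pi_div_two]
  constructor
  · contrapose!
    exact fun h => div_nonpos_of_nonpos_of_nonneg h (by positivity)
  · exact fun h => div_pos h (h.trans_le (real_inner_le_norm x y))

theorem norm_lt_norm_add_of_inner_pos {x y : E} (h : 0 < ⟪x, y⟫) : ‖x‖ < ‖x + y‖ := by
  refine lt_of_pow_lt_pow_left₀ 2 (norm_nonneg _) ?_
  calc ‖x‖ ^ 2 < ‖x‖ ^ 2 + 2 * ⟪x, y⟫ + ‖y‖ ^ 2 := by linarith [sq_nonneg ‖y‖]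
    _ = ‖x + y‖ ^ 2 := (norm_add_sq_real x y).symm

theorem stmt_3_general {ι : Type*} [Fintype ι] {h₀ : E} {S : ι → Set E} {g : ι → E}
    (hg : g ∈ Set.univ.pi S)
    (hopt : IsMaxOn (fun g' : ι → E => ‖h₀ + ∑ m, g' m‖) (Set.univ.pi S) g)
    {n : ι} {x : E} (hx : x ∈ S n) (hang : angle (h₀ + ∑ m, g m) x < Real.pi / 2) :
    g n ≠ 0 := by
  classical
  -- If `g n` were zero, switching it to `x` would add `x` to the total and lengthen it.
  intro hgn
  have hupdate : Function.update g n x ∈ Set.univ.pi S :=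
    (Set.update_mem_pi_iff_of_mem hg).2 fun _ => hx
  have hle : ‖h₀ + ∑ m, g m + x‖ ≤ ‖h₀ + ∑ m, g m‖ := by
    simpa only [sum_update_of_eq_zero (Finset.mem_univ n) hgn, ← add_assoc]
      using isMaxOn_iff.1 hopt _ hupdate
  exact hle.not_gt (norm_lt_norm_add_of_inner_pos (angle_lt_pi_div_two_iff_inner_pos.1 hang))

end InnerProductSpace

theorem ang_eq_angle (a b : ℂ) : ang a b = angle a b := by
  rw [ang, angle_comm, angle, Complex.inner, mul_comm ‖b‖]

/-- Lemma 2: if some `F n i` makes an angle `< π/2` with the optimal overall channel `h^*`,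
then element `n` is not turned off in the optimal configuration. -/
theorem stmt_3
    {N K : ℕ} (hN : 0 < N) (hK : 0 < K)
    (h_d : ℂ) (v : Fin N → ℂ) (φ : Fin K → ℝ)
    (hφinj : Function.Injective φ)
    (hφrange : ∀ i, 0 ≤ φ i ∧ φ i < 2 * Real.pi)
    (F : Fin N → Fin K → ℂ)
    (hF : ∀ m i, F m i = v m * Complex.exp ((φ i : ℂ) * Complex.I))
    (g : Fin N → ℂ)
    (hg : ∀ m, g m = 0 ∨ ∃ i, g m = F m i)
    (hopt : ∀ g' : Fin N → ℂ, (∀ m, g' m = 0 ∨ ∃ i, g' m = F m i) →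
      ‖h_d + ∑ m, g' m‖ ≤ ‖h_d + ∑ m, g m‖)
    (hstar : h_d + ∑ m, g m ≠ 0)
    (n : Fin N) (hvn : v n ≠ 0)
    (i : Fin K) (hang : ang (h_d + ∑ m, g m) (F n i) < Real.pi / 2) :
    g n ≠ 0 := by
  rw [ang_eq_angle] at hang
  exact stmt_3_general (S := fun m => {0} ∪ {z | ∃ i, z = F m i}) (fun m _ => hg m)
    (fun g' hg' => hopt g' fun m => hg' m trivial) (Or.inr ⟨i, rfl⟩) hang
end

section
/- (No element is off when consecutive phase gaps are below π) Suppose the phase shifts satisfy 0 ≤ φ_1 < φ_2 < … < φ_K < 2π, with φ_{i+1} − φ_i < π for every i ∈ {1,…,K−1} and 2π − φ_K + φ_1 < π. Then for every nonzero z ∈ ℂ there exists an index i with ang(z, e^{jφ_i}) < π/2. Consequently, in every optimal configuration with overall channel h^* ≠ 0 and v_n ≠ 0 for all n, every element is on: g_n^* ≠ 0 for all n. -/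
/-!
Reduce `arg z` modulo `2π` to `[φ₀, φ₀ + 2π)`. It then falls between two cyclically consecutive
phases less than `π` apart, so it is within `π / 2` of one of them. An element that is off in an
optimal configuration with channel `h` contradicts this: some `v n * exp (i φ)` has positive inner
product with `h`, so switching it on strictly increases `‖h‖`.
-/

open Complex ComplexConjugate Function
open scoped Real RealInnerProductSpace

section PhaseGaps

theorem exists_castSucc_le_lt_succ_or_last_le {α : Type*} [LinearOrder α] {k : ℕ}
    {φ : Fin (k + 1) → α} {x : α} (hx : φ 0 ≤ x) :
    (∃ i : Fin k, φ i.castSucc ≤ x ∧ x < φ i.succ) ∨ φ (Fin.last k) ≤ x := by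
  by_contra! ⟨no_crossing, hlast⟩
  have all_le (i : Fin (k + 1)) : φ i ≤ x := i.induction hx no_crossing
  exact hlast.not_ge (all_le _)

theorem cos_sub_pos_or_cos_sub_pos {a b θ : ℝ} (ha : a ≤ θ) (hb : θ ≤ b) (hab : b - a < π) :
    0 < Real.cos (θ - a) ∨ 0 < Real.cos (θ - b) := by
  rcases lt_or_ge (θ - a) (π / 2) with near_a | far_a
  · exact .inl (Real.cos_pos_of_mem_Ioo ⟨by linarith [Real.pi_pos], near_a⟩)
  · exact .inr (Real.cos_pos_of_mem_Ioo ⟨by linarith, by linarith [Real.pi_pos]⟩)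

variable {k : ℕ} {φ : Fin (k + 1) → ℝ}

theorem exists_cos_sub_pos_of_mem_Ico (hgap : ∀ i : Fin k, φ i.succ - φ i.castSucc < π)
    (hwrap : 2 * π - φ (Fin.last k) + φ 0 < π) {θ : ℝ}
    (hθ : θ ∈ Set.Ico (φ 0) (φ 0 + 2 * π)) :
    ∃ i, 0 < Real.cos (θ - φ i) := by
  rcases exists_castSucc_le_lt_succ_or_last_le hθ.1 with ⟨i, hi, hi'⟩ | hlast
  · rcases cos_sub_pos_or_cos_sub_pos hi hi'.le (hgap i) with hpos | hpos
    · exact ⟨_, hpos⟩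
    · exact ⟨_, hpos⟩
  · rcases cos_sub_pos_or_cos_sub_pos hlast hθ.2.le (by linarith) with hpos | hpos
    · exact ⟨_, hpos⟩
    · rw [← sub_sub, Real.cos_sub_two_pi] at hpos
      exact ⟨_, hpos⟩

theorem exists_cos_sub_pos (hgap : ∀ i : Fin k, φ i.succ - φ i.castSucc < π)
    (hwrap : 2 * π - φ (Fin.last k) + φ 0 < π) (t : ℝ) :
    ∃ i, 0 < Real.cos (t - φ i) := by
  have cos_sub_periodic : Periodic (fun t i ↦ Real.cos (t - φ i)) (2 * π) := fun t ↦
    funext fun i ↦ Real.cos_periodic.sub_const (φ i) t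
  obtain ⟨θ, hθ, cos_eq⟩ := cos_sub_periodic.exists_mem_Ico Real.two_pi_pos t (φ 0)
  obtain ⟨i, hi⟩ := exists_cos_sub_pos_of_mem_Ico hgap hwrap hθ
  exact ⟨i, hi.trans_eq (congrFun cos_eq i).symm⟩

end PhaseGaps

section ComplexPlane

theorem ang_lt_pi_div_two_iff {a b : ℂ} : ang a b < π / 2 ↔ 0 < ⟪a, b⟫ := by
  rw [real_inner_comm, Complex.inner, ang, Real.arccos_lt_pi_div_two]
  refine ⟨fun h ↦ ?_, fun h ↦ ?_⟩
  · exact pos_of_mul_pos_left (by rwa [div_eq_mul_inv] at h) (by positivity)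
  · have ha : a ≠ 0 := by rintro rfl; simp at h
    have hb : b ≠ 0 := by rintro rfl; simp at h
    positivity

theorem real_inner_mul_right_eq_inner_mul_conj (z v w : ℂ) : ⟪z, v * w⟫ = ⟪z * conj v, w⟫ := by
  simp only [Complex.inner, map_mul, conj_conj]
  ring_nf

theorem real_inner_exp_ofReal_mul_I (z : ℂ) (t : ℝ) :
    ⟪z, exp (t * I)⟫ = ‖z‖ * Real.cos (z.arg - t) := by
  rw [Complex.inner, mul_re, conj_re, conj_im, exp_ofReal_mul_I_re, exp_ofReal_mul_I_im,
    Real.cos_sub, ← norm_mul_cos_arg z, ← norm_mul_sin_arg z]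
  ring

theorem exists_real_inner_exp_pos {k : ℕ} {φ : Fin (k + 1) → ℝ}
    (hgap : ∀ i : Fin k, φ i.succ - φ i.castSucc < π)
    (hwrap : 2 * π - φ (Fin.last k) + φ 0 < π) {z : ℂ} (hz : z ≠ 0) :
    ∃ i, 0 < ⟪z, exp (φ i * I)⟫ := by
  obtain ⟨i, hi⟩ := exists_cos_sub_pos hgap hwrap z.arg
  refine ⟨i, ?_⟩
  rw [real_inner_exp_ofReal_mul_I]
  positivity

end ComplexPlane

section Optimality

variable {ι E : Type*} [Fintype ι] [NormedAddCommGroup E] [InnerProductSpace ℝ E]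

theorem real_inner_nonpos_of_norm_add_le {x y : E} (h : ‖x + y‖ ≤ ‖x‖) : ⟪x, y⟫ ≤ 0 := by
  have norm_sq_le : ‖x + y‖ ^ 2 ≤ ‖x‖ ^ 2 := by gcongr
  rw [norm_add_sq_real] at norm_sq_le
  linarith [sq_nonneg ‖y‖]

theorem sum_update_eq_sum_add_sub {M : Type*} [AddCommGroup M] [DecidableEq ι] (g : ι → M)
    (n : ι) (a : M) : ∑ m, update g n a m = ∑ m, g m + (a - g n) := by
  rw [Finset.sum_update_of_mem (Finset.mem_univ n),
    Finset.sum_eq_add_sum_sdiff_singleton_of_mem (Finset.mem_univ n) g]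
  abel

theorem real_inner_sub_nonpos_of_isMaxOn_norm_add_sum {A : ι → Set E} {c : E} {g : ι → E}
    (hg : g ∈ Set.univ.pi A) (hmax : IsMaxOn (fun f ↦ ‖c + ∑ m, f m‖) (Set.univ.pi A) g)
    {n : ι} {a : E} (ha : a ∈ A n) : ⟪c + ∑ m, g m, a - g n⟫ ≤ 0 := by
  classical
  have update_mem : update g n a ∈ Set.univ.pi A :=
    (Set.update_mem_pi_iff_of_mem hg).2 fun _ ↦ ha
  have norm_le : ‖c + ∑ m, update g n a m‖ ≤ ‖c + ∑ m, g m‖ := hmax update_mem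
  rw [sum_update_eq_sum_add_sub, ← add_assoc] at norm_le
  exact real_inner_nonpos_of_norm_add_le norm_le

end Optimality

theorem stmt_15_general {ι : Type*} [Fintype ι] {k : ℕ} (h_d : ℂ) (v : ι → ℂ)
    (φ : Fin (k + 1) → ℝ) (hgap : ∀ i : Fin k, φ i.succ - φ i.castSucc < π)
    (hwrap : 2 * π - φ (Fin.last k) + φ 0 < π) :
    (∀ z : ℂ, z ≠ 0 → ∃ i, ang z (exp (φ i * I)) < π / 2) ∧
    (∀ g : ι → ℂ, (∀ m, g m = 0 ∨ ∃ i, g m = v m * exp (φ i * I)) →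
      (∀ g' : ι → ℂ, (∀ m, g' m = 0 ∨ ∃ i, g' m = v m * exp (φ i * I)) →
        ‖h_d + ∑ m, g' m‖ ≤ ‖h_d + ∑ m, g m‖) →
      h_d + ∑ m, g m ≠ 0 → ∀ n, v n ≠ 0 → g n ≠ 0) := by
  refine ⟨fun z hz ↦ ?_, fun g hg hopt hne n hv hoff ↦ ?_⟩
  · simpa only [ang_lt_pi_div_two_iff] using exists_real_inner_exp_pos hgap hwrap hz
  · obtain ⟨i, hi⟩ := exists_real_inner_exp_pos hgap hwrap
      (mul_ne_zero hne ((map_ne_zero conj).2 hv))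
    let options (m : ι) : Set ℂ := {w | w = 0 ∨ ∃ i, w = v m * exp (φ i * I)}
    have inner_nonpos := real_inner_sub_nonpos_of_isMaxOn_norm_add_sum (A := options)
      (fun m _ ↦ hg m) (fun g' hg' ↦ hopt g' fun m ↦ hg' m trivial) (n := n) (.inr ⟨i, rfl⟩)
    rw [hoff, sub_zero, real_inner_mul_right_eq_inner_mul_conj] at inner_nonpos
    exact hi.not_ge inner_nonpos

/-- If the phase shifts `0 ≤ φ 1 < … < φ K < 2π` have all consecutive gaps (including the
wrap-around gap) below `π`, then every nonzero `z` makes an angle `< π/2` with some `e^{jφ i}`;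
consequently, in every optimal configuration with `h^* ≠ 0` and all `v n ≠ 0`, every element
is on. -/
theorem stmt_15
    {N K : ℕ} (hN : 0 < N) (hK : 0 < K)
    (h_d : ℂ) (v : Fin N → ℂ) (φ : Fin K → ℝ)
    (hφmono : StrictMono φ)
    (hφ0 : 0 ≤ φ ⟨0, hK⟩)
    (hφtop : φ ⟨K - 1, Nat.sub_lt hK one_pos⟩ < 2 * Real.pi)
    (hgap : ∀ i : Fin K, ∀ h : i.val + 1 < K, φ ⟨i.val + 1, h⟩ - φ i < Real.pi)
    (hwrap : 2 * Real.pi - φ ⟨K - 1, Nat.sub_lt hK one_pos⟩ + φ ⟨0, hK⟩ < Real.pi)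
    (F : Fin N → Fin K → ℂ)
    (hF : ∀ m i, F m i = v m * Complex.exp ((φ i : ℂ) * Complex.I)) :
    (∀ z : ℂ, z ≠ 0 →
      ∃ i : Fin K, ang z (Complex.exp ((φ i : ℂ) * Complex.I)) < Real.pi / 2) ∧
    (∀ g : Fin N → ℂ, (∀ m, g m = 0 ∨ ∃ i, g m = F m i) →
      (∀ g' : Fin N → ℂ, (∀ m, g' m = 0 ∨ ∃ i, g' m = F m i) →
        ‖h_d + ∑ m, g' m‖ ≤ ‖h_d + ∑ m, g m‖) →
      h_d + ∑ m, g m ≠ 0 → (∀ n, v n ≠ 0) →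
      ∀ n, g n ≠ 0) := by
  obtain ⟨k, rfl⟩ := Nat.exists_eq_add_one.2 hK
  obtain rfl : F = fun m i ↦ v m * exp (φ i * I) := funext₂ hF
  obtain ⟨hang, hon⟩ := stmt_15_general h_d v φ (fun i ↦ hgap i.castSucc i.succ.isLt) hwrap
  exact ⟨hang, fun g hg hopt hne hv n ↦ hon g hg hopt hne n (hv n)⟩
end

section
/- (Equivalence of the relaxed and binary amplitude problems) The supremum of |h(β,α)| over all amplitude vectors β ∈ [0,1]^N and phase vectors α ∈ Φ^N equals the maximum of |h(β,α)| over the finite set of β ∈ {0,1}^N and α ∈ Φ^N; in particular this supremum is attained. -/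
/-!
For fixed phases `α`, the gain `|h(β, α)|` is a convex function of the amplitudes `β`, and the cube
`[0,1]^N` is the convex hull of its vertices `{0,1}^N`. By the maximum principle for convex
functions, every relaxed amplitude vector is dominated by a binary one with the same phases.
The maximum over binary amplitudes exists by compactness, so it is also the maximum over the cube.
-/

open Set

theorem convexHull_pi_pair_zero_one {ι : Type*} [Finite ι] :
    convexHull ℝ (univ.pi fun _ : ι ↦ ({0, 1} : Set ℝ)) = univ.pi fun _ ↦ Icc 0 1 := by
  simp only [convexHull_pi, convexHull_pair, segment_eq_Icc zero_le_one]

theorem convexOn_norm_add_sum_smul {ι E : Type*} [Fintype ι] [SeminormedAddCommGroup E]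
    [NormedSpace ℝ E] (z : E) (c : ι → E) :
    ConvexOn ℝ univ fun β : ι → ℝ ↦ ‖z + ∑ n, β n • c n‖ :=
  (convexOn_univ_norm.translate_right z).comp_linearMap (Fintype.linearCombination ℝ c)

section ConvexInFirstVariable

variable {E X : Type*} [AddCommGroup E] [Module ℝ E] {f : E × X → ℝ} {S : Set E} {T : Set X}

theorem isCofinalFor_image_convexHull_prod
    (hf : ∀ y ∈ T, ConvexOn ℝ (convexHull ℝ S) fun x ↦ f (x, y)) :
    IsCofinalFor (f '' (convexHull ℝ S ×ˢ T)) (f '' (S ×ˢ T)) := by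
  rintro _ ⟨⟨x, y⟩, ⟨hx, hy⟩, rfl⟩
  obtain ⟨x', hx', hle⟩ := (hf y hy).exists_ge_of_mem_convexHull (subset_convexHull ℝ S) hx
  exact ⟨f (x', y), mem_image_of_mem f ⟨hx', hy⟩, hle⟩

theorem exists_isGreatest_image_prod_and_convexHull_prod [TopologicalSpace E] [TopologicalSpace X]
    (hS : IsCompact S) (hS₀ : S.Nonempty) (hT : IsCompact T) (hT₀ : T.Nonempty)
    (hcont : ContinuousOn f (S ×ˢ T))
    (hconv : ∀ y ∈ T, ConvexOn ℝ (convexHull ℝ S) fun x ↦ f (x, y)) :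
    ∃ M, IsGreatest (f '' (S ×ˢ T)) M ∧ IsGreatest (f '' (convexHull ℝ S ×ˢ T)) M := by
  obtain ⟨M, hM⟩ := ((hS.prod hT).image_of_continuousOn hcont).exists_isGreatest
    ((hS₀.prod hT₀).image f)
  have hsub : f '' (S ×ˢ T) ⊆ f '' (convexHull ℝ S ×ˢ T) :=
    image_mono (prod_mono_left (subset_convexHull ℝ S))
  exact ⟨M, hM, hsub hM.1,
    upperBounds_mono_of_isCofinalFor (isCofinalFor_image_convexHull_prod hconv) hM.2⟩

end ConvexInFirstVariable

section Channel

variable {ι : Type*} [Fintype ι]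

/-- The modulus `|h(β, α)|` of the overall channel coefficient, as a function of the pair `(β, α)`
of amplitude and phase vectors. The elements are indexed by an arbitrary finite type. -/
noncomputable def channelGain (h_d : ℂ) (v : ι → ℂ) (p : (ι → ℝ) × (ι → ℝ)) : ℝ :=
  ‖h_d + ∑ n, v n * (p.1 n : ℂ) * Complex.exp ((p.2 n : ℂ) * Complex.I)‖

theorem continuous_channelGain (h_d : ℂ) (v : ι → ℂ) : Continuous (channelGain h_d v) := by
  unfold channelGain
  fun_prop

theorem convexOn_channelGain (h_d : ℂ) (v : ι → ℂ) (α : ι → ℝ) :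
    ConvexOn ℝ univ fun β ↦ channelGain h_d v (β, α) := by
  refine (convexOn_norm_add_sum_smul h_d fun n ↦
    v n * Complex.exp ((α n : ℂ) * Complex.I)).congr fun β _ ↦ ?_
  simp only [channelGain, Complex.real_smul, mul_assoc, mul_left_comm]

theorem image_channelGain_pi_prod_pi (h_d : ℂ) (v : ι → ℂ) (S Φ : Set ℝ) :
    channelGain h_d v '' ((univ.pi fun _ ↦ S) ×ˢ (univ.pi fun _ ↦ Φ)) =
      {x | ∃ β α : ι → ℝ, (∀ n, β n ∈ S) ∧ (∀ n, α n ∈ Φ) ∧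
        x = ‖h_d + ∑ n, v n * (β n : ℂ) * Complex.exp ((α n : ℂ) * Complex.I)‖} := by
  ext x
  simp only [mem_image, Prod.exists, mem_prod, mem_univ_pi, and_assoc, channelGain, mem_ofPred_eq,
    eq_comm]

theorem stmt_16_general (h_d : ℂ) (v : ι → ℂ) {Φ : Set ℝ} (hΦc : IsCompact Φ) (hΦ : Φ.Nonempty)
    (A B : Set ℝ)
    (hA : A = {x | ∃ β α : ι → ℝ, (∀ n, β n ∈ Icc (0 : ℝ) 1) ∧ (∀ n, α n ∈ Φ) ∧
        x = ‖h_d + ∑ n, v n * (β n : ℂ) * Complex.exp ((α n : ℂ) * Complex.I)‖})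
    (hB : B = {x | ∃ β α : ι → ℝ, (∀ n, β n = 0 ∨ β n = 1) ∧ (∀ n, α n ∈ Φ) ∧
        x = ‖h_d + ∑ n, v n * (β n : ℂ) * Complex.exp ((α n : ℂ) * Complex.I)‖}) :
    IsGreatest B (sSup A) ∧ sSup A ∈ A := by
  let vertices : Set (ι → ℝ) := univ.pi fun _ ↦ {0, 1}
  let phases : Set (ι → ℝ) := univ.pi fun _ ↦ Φ
  have hA' : A = channelGain h_d v '' (convexHull ℝ vertices ×ˢ phases) := by
    rw [hA, convexHull_pi_pair_zero_one, image_channelGain_pi_prod_pi]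
  have hB' : B = channelGain h_d v '' (vertices ×ˢ phases) :=
    hB.trans (image_channelGain_pi_prod_pi h_d v {0, 1} Φ).symm
  obtain ⟨M, hMB, hMA⟩ := exists_isGreatest_image_prod_and_convexHull_prod
    (isCompact_univ_pi fun _ ↦ (toFinite {0, 1}).isCompact)
    (univ_pi_nonempty_iff.2 fun _ ↦ insert_nonempty 0 {1})
    (isCompact_univ_pi fun _ ↦ hΦc) (univ_pi_nonempty_iff.2 fun _ ↦ hΦ)
    (continuous_channelGain h_d v).continuousOn
    fun α _ ↦ (convexOn_channelGain h_d v α).subset (subset_univ _) (convex_convexHull ℝ vertices)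
  rw [← hA'] at hMA
  rw [← hB'] at hMB
  rw [hMA.csSup_eq]
  exact ⟨hMB, hMA.1⟩

end Channel

/-- Equivalence of the relaxed and binary amplitude problems: the supremum of `|h(β,α)|` over
`β ∈ [0,1]^N`, `α ∈ Φ^N` equals the maximum of `|h(β,α)|` over the finite set of binary
`β ∈ {0,1}^N`, `α ∈ Φ^N`; in particular the supremum is attained. -/
theorem stmt_16 {N : ℕ} (hN : 0 < N) (h_d : ℂ) (v : Fin N → ℂ)
    (Φ : Finset ℝ) (hΦ : Φ.Nonempty)
    (A B : Set ℝ)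
    (hA : A = {x | ∃ β α : Fin N → ℝ, (∀ n, β n ∈ Set.Icc (0:ℝ) 1) ∧ (∀ n, α n ∈ Φ) ∧
        x = ‖h_d + ∑ n, v n * (β n : ℂ) * Complex.exp ((α n : ℂ) * Complex.I)‖})
    (hB : B = {x | ∃ β α : Fin N → ℝ, (∀ n, β n = 0 ∨ β n = 1) ∧ (∀ n, α n ∈ Φ) ∧
        x = ‖h_d + ∑ n, v n * (β n : ℂ) * Complex.exp ((α n : ℂ) * Complex.I)‖}) :
    IsGreatest B (sSup A) ∧ sSup A ∈ A :=
  stmt_16_general h_d v Φ.finite_toSet.isCompact hΦ A B hA hB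
end
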